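/- Every width-w decision list on n variables can be ε-approximated under the uniform distribution by a function depending on at most k = (2 + (1/w)·log_2(1/ε))^{Cw} variables, for an absolute constant C. -/

import Mathlib

open Finset
open scoped Classical BigOperators

noncomputable section

/-- A term over `n` Boolean variables, given as a partial assignment:
`C i = some b` means the literal `x i = b` appears in the term. -/
abbrev Term (n : ℕ) := Fin n → Option Bool

/-- Satisfaction of a term by an assignment. -/
def TermSat {n : ℕ} (C : Term n) (x : Fin n → Bool) : Prop :=
  ∀ i b, C i = some b → x i = b

/-- Width of a term: the number of variables it mentions. -/
def termWidth {n : ℕ} (C : Term n) : ℕ :=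
  (Finset.univ.filter fun i => C i ≠ none).card

/-- The index function of a decision list with terms `C`:
the first index whose term is satisfied by `x` (and `m` conventionally if none,
since `sInf ∅ = 0`; the default rule hypothesis makes the set nonempty). -/
def DLind {n m : ℕ} (C : Fin m → Term n) (x : Fin n → Bool) : ℕ :=
  sInf {i : ℕ | ∃ h : i < m, TermSat (C ⟨i, h⟩) x}

/-- Evaluation of a decision list with terms `C` and values `v`. -/
def DLeval {n m : ℕ} {V : Type} [Inhabited V] (C : Fin m → Term n)
    (v : Fin m → V) (x : Fin n → Bool) : V :=
  if h : DLind C x < m then v ⟨DLind C x, h⟩ else default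

/-- Probability of an event under the uniform distribution on `{0,1}^n`. -/
def pr (n : ℕ) (P : (Fin n → Bool) → Prop) : ℝ :=
  ((Finset.univ.filter P).card : ℝ) / 2 ^ n

/-- Hit probability of index `i` in the decision list with terms `C`. -/
def pL {n m : ℕ} (C : Fin m → Term n) (i : ℕ) : ℝ :=
  pr n fun x => DLind C x = i

/-- The index function of the sub-decision-list `L|_J`. -/
def DLindSub {n m : ℕ} (C : Fin m → Term n) (J : Finset (Fin m)) (x : Fin n → Bool) : ℕ :=
  sInf {i : ℕ | ∃ h : i < m, (⟨i, h⟩ : Fin m) ∈ J ∧ TermSat (C ⟨i, h⟩) x}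

/-- Evaluation of the sub-decision-list `L|_J`. -/
def DLevalSub {n m : ℕ} {V : Type} [Inhabited V] (C : Fin m → Term n) (v : Fin m → V)
    (J : Finset (Fin m)) (x : Fin n → Bool) : V :=
  if h : DLindSub C J x < m then v ⟨DLindSub C J x, h⟩ else default

/-- A restriction: `some b` fixes a coordinate to `b`, `none` is a star. -/
abbrev Restriction (n : ℕ) := Fin n → Option Bool

/-- `x` is a completion of the restriction `ρ`. -/
def Compatible {n : ℕ} (ρ : Restriction n) (x : Fin n → Bool) : Prop :=
  ∀ i b, ρ i = some b → x i = b

/-- Number of stars of a restriction. -/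
def stars {n : ℕ} (ρ : Restriction n) : ℕ :=
  (Finset.univ.filter fun i => ρ i = none).card

/-- Weight of a restriction under the product distribution `U(n, α)`:
each coordinate independently `*` with probability `α`, and `0` or `1`
each with probability `(1-α)/2`. -/
def restW {n : ℕ} (α : ℝ) (ρ : Restriction n) : ℝ :=
  ∏ i : Fin n, if ρ i = none then α else (1 - α) / 2

/-- Index `i` is useful in the restricted decision list `L↾ρ`: some completion
of `ρ` hits rule `i`. -/
def Useful {n m : ℕ} (C : Fin m → Term n) (ρ : Restriction n) (i : Fin m) : Prop :=
  ∃ x, Compatible ρ x ∧ DLind C x = i.val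

/-- Number of useful indices of `L↾ρ`. -/
def useNum {n m : ℕ} (C : Fin m → Term n) (ρ : Restriction n) : ℕ :=
  (Finset.univ.filter fun i : Fin m => Useful C ρ i).card

/-- `q_L(α, i)`: probability over `ρ ~ U(n, α)` that index `i` is useful in `L↾ρ`. -/
def qL {n m : ℕ} (C : Fin m → Term n) (α : ℝ) (i : Fin m) : ℝ :=
  ∑ ρ : Restriction n, restW α ρ * (if Useful C ρ i then 1 else 0)

/-- Transition weight of the `β`-noise on a single bit. -/
def noiseW (β : ℝ) (a b : Bool) : ℝ := if a = b then (1 + β) / 2 else (1 - β) / 2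

/-- Joint density of `(x, y)` where `x` is uniform and `y ~ N_β(x)`. -/
def pairW {n : ℕ} (β : ℝ) (x y : Fin n → Bool) : ℝ :=
  (1 / 2) ^ n * ∏ i : Fin n, noiseW β (x i) (y i)

/-- `Stab_L(β, i) = Pr[Ind L(x) = Ind L(y) = i]` for `x` uniform, `y ~ N_β(x)`. -/
def StabInd {n m : ℕ} (C : Fin m → Term n) (β : ℝ) (i : Fin m) : ℝ :=
  ∑ x : Fin n → Bool, ∑ y : Fin n → Bool,
    pairW β x y * (if DLind C x = i.val ∧ DLind C y = i.val then 1 else 0)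

/-- `Stab_β(g) = Pr[g(x) = g(y) = 1]` for `x` uniform, `y ~ N_β(x)`. -/
def stab {n : ℕ} (β : ℝ) (g : (Fin n → Bool) → Bool) : ℝ :=
  ∑ x : Fin n → Bool, ∑ y : Fin n → Bool,
    pairW β x y * (if g x = true ∧ g y = true then 1 else 0)

/-- Probability weight that a uniform completion of `ρ` equals `x`. -/
def compW {n : ℕ} (ρ : Restriction n) (x : Fin n → Bool) : ℝ :=
  if Compatible ρ x then (1 / 2) ^ stars ρ else 0

/-- Evaluation of a DNF with terms `T`. -/
def DNFeval {n M : ℕ} (T : Fin M → Term n) (x : Fin n → Bool) : Prop :=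
  ∃ t, TermSat (T t) x

lemma restW_nonneg {n : ℕ} {α : ℝ} (h0 : 0 ≤ α) (h1 : α ≤ 1) (ρ : Restriction n) :
    0 ≤ restW α ρ := by
  unfold restW
  apply Finset.prod_nonneg
  intro i _
  split_ifs <;> linarith

lemma restW_sum {n : ℕ} (α : ℝ) : ∑ ρ : Restriction n, restW α ρ = 1 := by
  unfold restW
  have h := Finset.prod_univ_sum (fun _ : Fin n => (Finset.univ : Finset (Option Bool)))
    (fun (_ : Fin n) (o : Option Bool) => if o = none then α else (1 - α) / 2)
  rw [Fintype.piFinset_univ] at h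
  rw [← h]
  apply Finset.prod_eq_one
  intro i _
  simp [Fintype.sum_option]
  ring

/-- Probability that a random restriction meets the event `P`. -/
def hitQ (n : ℕ) (β : ℝ) (P : (Fin n → Bool) → Prop) : ℝ :=
  ∑ ρ : Restriction n, restW (1 - β) ρ * (if ∃ x, Compatible ρ x ∧ P x then 1 else 0)

lemma pr_nonneg {n : ℕ} (P : (Fin n → Bool) → Prop) : 0 ≤ pr n P := by
  unfold pr; positivity

lemma hitQ_mono {n : ℕ} {β : ℝ} (h0 : 0 ≤ β) (h1 : β ≤ 1) {P P' : (Fin n → Bool) → Prop}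
    (h : ∀ x, P x → P' x) : hitQ n β P ≤ hitQ n β P' := by
  unfold hitQ
  apply Finset.sum_le_sum
  intro ρ _
  apply mul_le_mul_of_nonneg_left _ (restW_nonneg (by linarith) (by linarith) ρ)
  by_cases hh : ∃ x, Compatible ρ x ∧ P x
  · obtain ⟨x, hx, hp⟩ := hh
    rw [if_pos ⟨x, hx, hp⟩, if_pos ⟨x, hx, h x hp⟩]
  · rw [if_neg hh]; split_ifs <;> norm_num

lemma pr_succ {n : ℕ} (P : (Fin (n+1) → Bool) → Prop) :
    pr (n+1) P = (pr n (fun x => P (Fin.cons false x)) + pr n (fun x => P (Fin.cons true x))) / 2 := by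
  have e : ((Finset.univ.filter P).card : ℝ) =
      ((Finset.univ.filter fun x : Fin n → Bool => P (Fin.cons false x)).card : ℝ) +
      ((Finset.univ.filter fun x : Fin n → Bool => P (Fin.cons true x)).card : ℝ) := by
    rw [Finset.card_filter, Finset.card_filter, Finset.card_filter]
    push_cast
    rw [← Equiv.sum_comp (Fin.consEquiv (fun _ : Fin (n+1) => Bool)), Fintype.sum_prod_type]
    rw [Fintype.sum_bool, add_comm]
    rfl
  unfold pr
  rw [e, pow_succ]
  field_simp

lemma compat_cons {n : ℕ} (o : Option Bool) (ρ : Restriction n) (a : Bool) (x : Fin n → Bool) :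
    Compatible (n := n+1) (Fin.cons o ρ) (Fin.cons a x) ↔ (∀ b, o = some b → a = b) ∧ Compatible ρ x := by
  unfold Compatible
  rw [Fin.forall_fin_succ]
  simp

lemma exists_cons {n : ℕ} (P : (Fin (n+1) → Bool) → Prop) :
    (∃ x, P x) ↔ ∃ (a : Bool) (x : Fin n → Bool), P (Fin.cons a x) := by
  constructor
  · rintro ⟨x, hx⟩
    exact ⟨x 0, Fin.tail x, by rwa [Fin.cons_self_tail]⟩
  · rintro ⟨a, x, h⟩
    exact ⟨_, h⟩

lemma hitQ_succ {n : ℕ} (β : ℝ) (P : (Fin (n+1) → Bool) → Prop) :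
    hitQ (n+1) β P = (1 - β) * hitQ n β (fun x => P (Fin.cons false x) ∨ P (Fin.cons true x))
      + β / 2 * (hitQ n β (fun x => P (Fin.cons false x)) + hitQ n β (fun x => P (Fin.cons true x))) := by
  have hw : ∀ (o : Option Bool) (ρ : Restriction n),
      restW (n := n+1) (1-β) (Fin.cons o ρ) = (if o = none then 1 - β else β / 2) * restW (1-β) ρ := by
    intro o ρ
    unfold restW
    rw [Fin.prod_univ_succ]
    simp
  have hs : ∀ (b : Bool) (ρ : Restriction n),
      (∃ x, Compatible (n := n+1) (Fin.cons (some b) ρ) x ∧ P x) ↔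
        ∃ x, Compatible ρ x ∧ P (Fin.cons b x) := by
    intro b ρ
    rw [exists_cons]
    simp only [compat_cons]
    constructor
    · rintro ⟨a, x, ⟨h1, h2⟩, h3⟩
      have := h1 b rfl
      subst this
      exact ⟨x, h2, h3⟩
    · rintro ⟨x, h2, h3⟩
      exact ⟨b, x, ⟨by simp, h2⟩, h3⟩
  have hn : ∀ (ρ : Restriction n),
      (∃ x, Compatible (n := n+1) (Fin.cons none ρ) x ∧ P x) ↔
        ∃ x, Compatible ρ x ∧ (P (Fin.cons false x) ∨ P (Fin.cons true x)) := by
    intro ρ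
    rw [exists_cons]
    simp only [compat_cons]
    constructor
    · rintro ⟨a, x, ⟨h1, h2⟩, h3⟩
      cases a
      · exact ⟨x, h2, Or.inl h3⟩
      · exact ⟨x, h2, Or.inr h3⟩
    · rintro ⟨x, h2, h3 | h3⟩
      · exact ⟨false, x, ⟨by simp, h2⟩, h3⟩
      · exact ⟨true, x, ⟨by simp, h2⟩, h3⟩
  unfold hitQ
  rw [← Equiv.sum_comp (Fin.consEquiv (fun _ : Fin (n+1) => Option Bool)), Fintype.sum_prod_type]
  rw [Fintype.sum_option, Fintype.sum_bool]
  simp only [Fin.consEquiv, Equiv.coe_fn_mk, hw, hs, hn]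
  simp only [if_true, reduceCtorEq, if_false, mul_assoc, ← Finset.mul_sum]
  ring

lemma key_ineq_aux {β a b : ℝ} (h0 : 0 ≤ β) (h1 : β ≤ 1) (hb : 0 ≤ b) (hab : b ≤ a) :
    ((a + b) / 2) ^ β ≤ (1 - β) * a ^ β + β / 2 * (a ^ β + b ^ β) := by
  rcases eq_or_lt_of_le (hb.trans hab) with ha | ha
  · have : b = 0 := by linarith
    subst this
    subst ha
    simp
    nlinarith [Real.rpow_nonneg (le_refl (0:ℝ)) β]
  · obtain ⟨t, rfl⟩ : ∃ t, b = a * t := ⟨b / a, by field_simp⟩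
    have ht0 : 0 ≤ t := by
      by_contra h
      push Not at h
      nlinarith
    have ht1 : t ≤ 1 := by
      by_contra h
      push Not at h
      nlinarith
    rw [show (a + a * t) / 2 = a * ((1 + t) / 2) by ring, Real.mul_rpow ha.le (by linarith),
      Real.mul_rpow ha.le ht0]
    have hA : 0 ≤ a ^ β := Real.rpow_nonneg ha.le β
    have hB := rpow_one_add_le_one_add_mul_self (s := (1 + t) / 2 - 1) (by linarith) h0 h1
    rw [show 1 + ((1 + t) / 2 - 1) = (1 + t) / 2 by ring] at hB
    have hT : t ≤ t ^ β := by
      rcases eq_or_lt_of_le ht0 with h | h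
      · rw [← h]; exact Real.rpow_nonneg le_rfl β
      · simpa using Real.rpow_le_rpow_of_exponent_ge h ht1 h1
    have : ((1 + t) / 2) ^ β ≤ 1 - β / 2 + β / 2 * t ^ β := by nlinarith
    nlinarith [mul_le_mul_of_nonneg_left this hA]

lemma hit_lower {β : ℝ} (h0 : 0 < β) (h1 : β ≤ 1) : ∀ (n : ℕ) (P : (Fin n → Bool) → Prop),
    (pr n P) ^ β ≤ hitQ n β P := by
  intro n
  induction n with
  | zero =>
    intro P
    by_cases hP : P default
    · have e1 : pr 0 P = 1 := by
        unfold pr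
        rw [Finset.filter_true_of_mem]
        · simp
        · intro x _
          rwa [Subsingleton.elim x default]
      have e2 : hitQ 0 β P = 1 := by
        rw [← restW_sum (n := 0) (1 - β)]
        unfold hitQ
        apply Finset.sum_congr rfl
        intro ρ _
        rw [if_pos ⟨default, fun i => i.elim0, hP⟩, mul_one]
      rw [e1, e2, Real.one_rpow]
    · have e1 : pr 0 P = 0 := by
        unfold pr
        rw [Finset.filter_false_of_mem]
        · simp
        · intro x _
          rwa [Subsingleton.elim x default]
      rw [e1, Real.zero_rpow h0.ne']
      unfold hitQ
      apply Finset.sum_nonneg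
      intro ρ _
      apply mul_nonneg (restW_nonneg (by linarith) (by linarith) ρ)
      split_ifs <;> norm_num
  | succ n ih =>
    intro P
    rw [pr_succ, hitQ_succ]
    have i0 := ih (fun x => P (Fin.cons false x))
    have i1 := ih (fun x => P (Fin.cons true x))
    have m0 := hitQ_mono h0.le h1 (P := fun x => P (Fin.cons false x))
      (P' := fun x => P (Fin.cons false x) ∨ P (Fin.cons true x)) (fun x h => Or.inl h)
    have m1 := hitQ_mono h0.le h1 (P := fun x => P (Fin.cons true x))
      (P' := fun x => P (Fin.cons false x) ∨ P (Fin.cons true x)) (fun x h => Or.inr h)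
    have n0 := pr_nonneg (fun x : Fin n → Bool => P (Fin.cons false x))
    have n1 := pr_nonneg (fun x : Fin n → Bool => P (Fin.cons true x))
    rcases le_total (pr n (fun x => P (Fin.cons false x))) (pr n (fun x => P (Fin.cons true x))) with h | h
    · have := key_ineq_aux h0.le h1 n0 h
      rw [add_comm (pr n _) (pr n _)]
      refine this.trans ?_
      have a1 := mul_le_mul_of_nonneg_left (i1.trans m1) (show 0 ≤ 1 - β by linarith)
      have a2 := mul_le_mul_of_nonneg_left (add_le_add i1 i0) (show 0 ≤ β / 2 by linarith)
      linarith
    · have := key_ineq_aux h0.le h1 n1 h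
      refine this.trans ?_
      have a1 := mul_le_mul_of_nonneg_left (i0.trans m0) (show 0 ≤ 1 - β by linarith)
      have a2 := mul_le_mul_of_nonneg_left (add_le_add i0 i1) (show 0 ≤ β / 2 by linarith)
      linarith

lemma DLind_spec {n m : ℕ} (C : Fin m → Term n) (hm : 0 < m)
    (hC : C ⟨m - 1, Nat.sub_lt hm one_pos⟩ = (fun _ => none)) (x : Fin n → Bool) :
    ∃ h : DLind C x < m, TermSat (C ⟨DLind C x, h⟩) x := by
  have : (DLind C x) ∈ {i : ℕ | ∃ h : i < m, TermSat (C ⟨i, h⟩) x} := by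
    apply Nat.sInf_mem
    refine ⟨m - 1, Nat.sub_lt hm one_pos, ?_⟩
    rw [hC]
    intro i b h
    simp at h
  exact this

lemma DLind_le {n m : ℕ} (C : Fin m → Term n) (x : Fin n → Bool) (i : Fin m)
    (h : TermSat (C i) x) : DLind C x ≤ i.val :=
  Nat.sInf_le ⟨i.2, h⟩

/-- override `ρ` by the term. -/
def ovr {n : ℕ} (T : Term n) (ρ : Restriction n) : Restriction n :=
  fun j => if T j = none then ρ j else T j

/-- `i` is useful and its term is fixed by `ρ`. -/
def Final {n m : ℕ} (C : Fin m → Term n) (ρ : Restriction n) (i : Fin m) : Prop :=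
  Useful C ρ i ∧ ∀ j b, C i j = some b → ρ j = some b

lemma final_unique {n m : ℕ} (C : Fin m → Term n) (ρ : Restriction n) (i i' : Fin m)
    (h : Final C ρ i) (h' : Final C ρ i') : i = i' := by
  obtain ⟨⟨x, hx, hi⟩, hf⟩ := h
  obtain ⟨⟨x', hx', hi'⟩, hf'⟩ := h'
  have a := DLind_le C x i' (fun j b hb => hx j b (hf' j b hb))
  have b := DLind_le C x' i (fun j b hb => hx' j b (hf j b hb))
  apply Fin.ext
  omega

lemma useful_weight {n m w : ℕ} (C : Fin m → Term n) (hm : 0 < m)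
    (hC : C ⟨m - 1, Nat.sub_lt hm one_pos⟩ = (fun _ => none))
    (hw : ∀ j, termWidth (C j) ≤ w) {β : ℝ} (h0 : 0 < β) (h1 : β ≤ 1) (i : Fin m) :
    ∑ ρ ∈ Finset.univ.filter (fun ρ : Restriction n => Useful C ρ i), restW (1 - β) ρ ≤
      (2 / β) ^ w * ∑ ρ ∈ Finset.univ.filter (fun ρ : Restriction n => Final C ρ i), restW (1 - β) ρ := by
  have hmaps : ∀ ρ ∈ Finset.univ.filter (fun ρ : Restriction n => Useful C ρ i),
      ovr (C i) ρ ∈ Finset.univ.filter (fun ρ : Restriction n => Final C ρ i) := by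
    intro ρ hρ
    simp only [Finset.mem_filter, Finset.mem_univ, true_and] at hρ ⊢
    obtain ⟨x, hx, hi⟩ := hρ
    refine ⟨⟨x, ?_, hi⟩, ?_⟩
    · intro j b hb
      unfold ovr at hb
      split_ifs at hb with hh
      · exact hx j b hb
      · obtain ⟨h, hs⟩ := DLind_spec C hm hC x
        have : (⟨DLind C x, h⟩ : Fin m) = i := Fin.ext hi
        rw [this] at hs
        exact hs j b hb
    · intro j b hb
      simp [ovr, hb]
  rw [← Finset.sum_fiberwise_of_maps_to hmaps, Finset.mul_sum]
  apply Finset.sum_le_sum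
  intro σ hσ
  simp only [Finset.mem_filter, Finset.mem_univ, true_and] at hσ
  obtain ⟨_, hσ⟩ := hσ
  have hsub : (Finset.univ.filter (fun ρ : Restriction n => Useful C ρ i)).filter
      (fun ρ => ovr (C i) ρ = σ) ⊆
      Fintype.piFinset (fun j => if C i j = none then {σ j} else {none, σ j}) := by
    intro ρ hρ
    simp only [Finset.mem_filter, Finset.mem_univ, true_and] at hρ
    obtain ⟨⟨x, hx, hi⟩, hρ⟩ := hρ
    rw [Fintype.mem_piFinset]
    intro j
    have hj := congrFun hρ j
    unfold ovr at hj
    split_ifs with hh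
    · rw [if_pos hh] at hj
      simp [hj]
    · rw [if_neg hh] at hj
      rw [Finset.mem_insert, Finset.mem_singleton]
      rcases hr : ρ j with _ | b
      · left; rfl
      · right
        obtain ⟨c, hc⟩ := Option.ne_none_iff_exists'.mp hh
        obtain ⟨h, hs⟩ := DLind_spec C hm hC x
        have : (⟨DLind C x, h⟩ : Fin m) = i := Fin.ext hi
        rw [this] at hs
        rw [← hj, hc, ← hs j c hc, hx j b hr]
  refine (Finset.sum_le_sum_of_subset_of_nonneg hsub
    (fun ρ _ _ => restW_nonneg (by linarith) (by linarith) ρ)).trans ?_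
  unfold restW
  rw [← Finset.prod_univ_sum (fun j => if C i j = none then {σ j} else {none, σ j})
    (fun (_ : Fin n) (o : Option Bool) => if o = none then 1 - β else (1 - (1 - β)) / 2)]
  have hb2 : 1 ≤ 2 / β := by rw [le_div_iff₀ h0]; linarith
  have hpw : ∏ j : Fin n, (if C i j ≠ none then 2 / β else 1) ≤ (2 / β) ^ w := by
    rw [Finset.prod_ite]
    simp only [Finset.prod_const, one_pow, mul_one]
    exact pow_le_pow_right₀ hb2 (hw i)
  refine le_trans ?_ (mul_le_mul_of_nonneg_right hpw (Finset.prod_nonneg ?_))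
  · rw [← Finset.prod_mul_distrib]
    apply Finset.prod_le_prod
    · intro j _
      apply Finset.sum_nonneg
      intro o _
      split_ifs <;> linarith
    · intro j _
      by_cases hh : C i j = none
      · simp [hh]
      · obtain ⟨c, hc⟩ := Option.ne_none_iff_exists'.mp hh
        have hs := hσ j c hc
        rw [if_neg hh, if_pos hh, hs, Finset.sum_pair (by simp)]
        simp only [if_true, reduceCtorEq, if_false]
        have : 2 / β * ((1 - (1 - β)) / 2) = 1 := by
          rw [show 1 - (1 - β) = β by ring]; field_simp
        rw [this]; linarith
  · intro j _
    split_ifs <;> linarith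

lemma sum_pL {n m w : ℕ} (C : Fin m → Term n) (hm : 0 < m)
    (hC : C ⟨m - 1, Nat.sub_lt hm one_pos⟩ = (fun _ => none))
    (hw : ∀ j, termWidth (C j) ≤ w) {β : ℝ} (h0 : 0 < β) (h1 : β ≤ 1) :
    ∑ i : Fin m, (pL C i) ^ β ≤ (2 / β) ^ w := by
  have hstep : ∀ i : Fin m, (pL C i) ^ β ≤ (2 / β) ^ w *
      ∑ ρ ∈ Finset.univ.filter (fun ρ : Restriction n => Final C ρ i), restW (1 - β) ρ := by
    intro i
    refine le_trans (hit_lower h0 h1 n _) (le_trans (le_of_eq ?_) (useful_weight C hm hC hw h0 h1 i))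
    rw [Finset.sum_filter]
    unfold hitQ
    apply Finset.sum_congr rfl
    intro ρ _
    rw [mul_ite, mul_one, mul_zero]
    unfold Useful
    congr
  refine (Finset.sum_le_sum fun i _ => hstep i).trans ?_
  rw [← Finset.mul_sum]
  have hp : 0 ≤ (2 / β) ^ w := by positivity
  have : ∑ i : Fin m, ∑ ρ ∈ Finset.univ.filter (fun ρ : Restriction n => Final C ρ i),
      restW (1 - β) ρ ≤ 1 := by
    rw [← Finset.sum_biUnion]
    · refine le_trans ?_ (le_of_eq (restW_sum (n := n) (1 - β)))
      exact Finset.sum_le_sum_of_subset_of_nonneg (Finset.subset_univ _)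
        (fun ρ _ _ => restW_nonneg (by linarith) (by linarith) ρ)
    · intro i _ i' _ hne
      rw [Function.onFun, Finset.disjoint_left]
      intro ρ h h'
      simp only [Finset.mem_filter, Finset.mem_univ, true_and] at h h'
      exact hne (final_unique C ρ i i' h h')
  nlinarith

lemma DLindSub_eq {n m : ℕ} (C : Fin m → Term n) (hm : 0 < m)
    (hC : C ⟨m - 1, Nat.sub_lt hm one_pos⟩ = (fun _ => none)) (J : Finset (Fin m))
    (x : Fin n → Bool) (hJ : ∀ h : DLind C x < m, (⟨DLind C x, h⟩ : Fin m) ∈ J) :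
    DLindSub C J x = DLind C x := by
  obtain ⟨h, hs⟩ := DLind_spec C hm hC x
  have hmem : DLind C x ∈ {i : ℕ | ∃ h : i < m, (⟨i, h⟩ : Fin m) ∈ J ∧ TermSat (C ⟨i, h⟩) x} :=
    ⟨h, hJ h, hs⟩
  apply le_antisymm
  · exact Nat.sInf_le hmem
  · obtain ⟨h', _, hs'⟩ := Nat.sInf_mem ⟨_, hmem⟩
    exact DLind_le C x ⟨_, h'⟩ hs'

lemma final_bound {w : ℕ} (hw : 1 ≤ w) {ε T N : ℝ} (hε : 0 < ε) (hε1 : ε ≤ 1)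
    (hT : T = 2 + Real.logb 2 (1 / ε) / w)
    (hN : N * (((ε / (2 * T) ^ w) ^ (2:ℝ)) ^ (1 / T)) ≤ (2 * T) ^ w) :
    w * N ≤ T ^ ((7:ℝ) * w) := by
  have hw0 : (0:ℝ) < w := by exact_mod_cast hw
  have hl : 0 ≤ Real.logb 2 (1 / ε) := by
    apply Real.logb_nonneg (by norm_num)
    rw [le_div_iff₀ hε]; linarith
  have hT2 : 2 ≤ T := by
    rw [hT]
    have : 0 ≤ Real.logb 2 (1 / ε) / w := by positivity
    linarith
  set l := Real.logb 2 (1 / ε) with hldef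
  have hlT : l ≤ w * T := by
    rw [hT]
    have : (w:ℝ) * (2 + l / w) = 2 * w + l := by field_simp
    rw [this]; linarith
  have hA1 : 1 ≤ (2 * T) ^ w := one_le_pow₀ (by linarith)
  set A := (2 * T) ^ w with hA
  have hA0 : 0 < A := by linarith
  have hT0 : 0 < T := by linarith
  have hεl : 1 / ε = 2 ^ l := by
    rw [hldef, Real.rpow_logb (by norm_num) (by norm_num) (by positivity)]
  -- lower bound on the factor
  have hfac : 1 / (A * 4 ^ w) ≤ ((ε / A) ^ (2:ℝ)) ^ (1 / T) := by
    rw [← Real.rpow_mul (by positivity)]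
    have e : ε / A = (A * (1 / ε))⁻¹ := by field_simp
    rw [e, Real.inv_rpow (by positivity), one_div (A * 4 ^ w)]
    apply inv_anti₀ (by positivity)
    rw [Real.mul_rpow (by positivity) (by positivity)]
    have hexp : 2 * (1 / T) ≤ 1 := by
      rw [mul_one_div, div_le_one hT0]; exact hT2
    apply mul_le_mul _ _ (by positivity) (by positivity)
    · simpa using Real.rpow_le_rpow_of_exponent_le hA1 hexp
    · rw [hεl, ← Real.rpow_mul (by norm_num)]
      have : (4:ℝ) ^ w = 2 ^ ((2:ℝ) * w) := by
        rw [Real.rpow_mul (by norm_num), Real.rpow_natCast]; norm_num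
      rw [this]
      apply Real.rpow_le_rpow_of_exponent_le (by norm_num)
      have : l * (2 * (1 / T)) = 2 * (l / T) := by ring
      rw [this]
      have : l / T ≤ w := by rw [div_le_iff₀ hT0]; exact hlT
      linarith
  have hTp : T ^ ((7:ℝ) * w) = (T ^ 7) ^ w := by
    rw [Real.rpow_mul hT0.le, Real.rpow_natCast]
    norm_cast
  rw [hTp]
  rcases le_or_gt N 0 with hN0 | hN0
  · have : w * N ≤ 0 := mul_nonpos_of_nonneg_of_nonpos hw0.le hN0
    exact this.trans (by positivity)
  have h3 : N * (1 / (A * 4 ^ w)) ≤ A := (mul_le_mul_of_nonneg_left hfac hN0.le).trans hN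
  rw [mul_one_div, div_le_iff₀ (by positivity)] at h3
  have hw2 : (w:ℝ) ≤ 2 ^ w := by exact_mod_cast (Nat.lt_two_pow_self).le
  calc (w:ℝ) * N ≤ 2 ^ w * (A * (A * 4 ^ w)) := mul_le_mul hw2 h3 hN0.le (by positivity)
    _ = (32 * T ^ 2) ^ w := by
      rw [hA, ← mul_pow, ← mul_pow, ← mul_pow]; congr 1; ring
    _ ≤ (T ^ 7) ^ w := by
      apply pow_le_pow_left₀ (by positivity)
      have : (2:ℝ) ^ 5 ≤ T ^ 5 := pow_le_pow_left₀ (by norm_num) hT2 5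
      have h2 : 0 ≤ T ^ 2 := by positivity
      nlinarith

theorem junta_approximation :
    ∃ K : ℝ, 0 < K ∧
      ∀ (n m w : ℕ) (V : Type) (_ : Inhabited V)
        (C : Fin m → Term n) (v : Fin m → V) (ε : ℝ),
        1 ≤ w → 0 < ε → ε ≤ 1 →
        (∀ j, termWidth (C j) ≤ w) →
        ∀ (hm : 0 < m), C ⟨m - 1, Nat.sub_lt hm one_pos⟩ = (fun _ => none) →
        ∃ (S : Finset (Fin n)) (g : (Fin n → Bool) → V),
          (S.card : ℝ) ≤ (2 + Real.logb 2 (1 / ε) / w) ^ (K * w) ∧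
          (∀ x y : Fin n → Bool, (∀ i ∈ S, x i = y i) → g x = g y) ∧
          pr n (fun x => DLeval C v x ≠ g x) ≤ ε := by
  refine ⟨7, by norm_num, ?_⟩
  intro n m w V _ C v ε hw hε hε1 hwid hm hC
  have hw0 : (0:ℝ) < w := by exact_mod_cast hw
  have hl : 0 ≤ Real.logb 2 (1 / ε) := by
    apply Real.logb_nonneg (by norm_num)
    rw [le_div_iff₀ hε]; linarith
  obtain ⟨T, hT⟩ : ∃ T, T = 2 + Real.logb 2 (1 / ε) / w := ⟨_, rfl⟩
  have hT2 : 2 ≤ T := by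
    rw [hT]
    have : 0 ≤ Real.logb 2 (1 / ε) / w := by positivity
    linarith
  have hT0 : 0 < T := by linarith
  have hβ : 1 / T ≤ 1 / 2 := one_div_le_one_div_of_le (by norm_num) hT2
  have hβ0 : 0 < 1 / T := by positivity
  have hsum := sum_pL C hm hC hwid hβ0 (by linarith)
  rw [show 2 / (1 / T) = 2 * T by field_simp] at hsum
  have hA1 : 1 ≤ (2 * T) ^ w := one_le_pow₀ (by linarith)
  obtain ⟨A, hA⟩ : ∃ A, A = (2 * T) ^ w := ⟨_, rfl⟩
  obtain ⟨δ, hδ⟩ : ∃ δ, δ = (ε / (2 * T) ^ w) ^ (2:ℝ) := ⟨_, rfl⟩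
  have hδ0 : 0 < δ := by rw [hδ]; positivity
  have hp0 : ∀ i : Fin m, 0 ≤ pL C i := fun i => pr_nonneg _
  let J : Finset (Fin m) := Finset.univ.filter fun i => δ ≤ pL C i
  have hJ : (J.card : ℝ) * δ ^ (1 / T) ≤ (2 * T) ^ w := by
    refine le_trans ?_ hsum
    rw [← nsmul_eq_mul, ← Finset.sum_const]
    refine le_trans (Finset.sum_le_sum (g := fun i : Fin m => pL C i ^ (1 / T)) ?_)
      (Finset.sum_le_sum_of_subset_of_nonneg (Finset.subset_univ J)
        (fun i _ _ => Real.rpow_nonneg (hp0 i) _))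
    intro i hi
    simp only [J, Finset.mem_filter, Finset.mem_univ, true_and] at hi
    exact Real.rpow_le_rpow hδ0.le hi hβ0.le
  refine ⟨J.biUnion fun j => Finset.univ.filter fun i => C j i ≠ none, DLevalSub C v J, ?_, ?_, ?_⟩
  · have hc : (((J.biUnion fun j => Finset.univ.filter fun i => C j i ≠ none).card : ℕ) : ℝ)
        ≤ w * (J.card : ℝ) := by
      have := Finset.card_biUnion_le_card_mul J
        (fun j => Finset.univ.filter fun i => C j i ≠ none) w (fun j _ => hwid j)
      rw [mul_comm]
      exact_mod_cast this
    refine hc.trans ?_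
    rw [← hT]
    rw [hδ] at hJ
    exact final_bound hw hε hε1 hT hJ
  · intro x y hxy
    have : DLindSub C J x = DLindSub C J y := by
      unfold DLindSub
      congr 1
      ext i
      simp only [Set.mem_ofPred_eq]
      apply exists_congr
      intro h
      apply and_congr_right
      intro hi
      have hv : ∀ k b, C ⟨i, h⟩ k = some b → x k = y k := by
        intro k b hk
        apply hxy
        rw [Finset.mem_biUnion]
        exact ⟨_, hi, by simp [hk]⟩
      constructor
      · intro hs k b hk
        rw [← hv k b hk]; exact hs k b hk
      · intro hs k b hk
        rw [hv k b hk]; exact hs k b hk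
    unfold DLevalSub
    simp only [this]
  · have hsub : (Finset.univ.filter fun x => DLeval C v x ≠ DLevalSub C v J x) ⊆
        (Finset.univ \ J).biUnion fun i => Finset.univ.filter fun x => DLind C x = i.val := by
      intro x hx
      simp only [Finset.mem_filter, Finset.mem_univ, true_and] at hx
      obtain ⟨h, hs⟩ := DLind_spec C hm hC x
      rw [Finset.mem_biUnion]
      refine ⟨⟨_, h⟩, ?_, by simp⟩
      rw [Finset.mem_sdiff]
      refine ⟨Finset.mem_univ _, fun hmem => hx ?_⟩
      have := DLindSub_eq C hm hC J x (fun _ => hmem)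
      unfold DLeval DLevalSub
      simp only [this]
    have h1 : pr n (fun x => DLeval C v x ≠ DLevalSub C v J x) ≤ ∑ i ∈ Finset.univ \ J, pL C i := by
      unfold pL pr
      rw [← Finset.sum_div]
      apply div_le_div_of_nonneg_right _ (by positivity)
      have := (Finset.card_le_card hsub).trans Finset.card_biUnion_le
      rw [← Nat.cast_sum, Nat.cast_le]
      refine le_trans (le_of_eq ?_) (this.trans (le_of_eq ?_))
      · congr
      · apply Finset.sum_congr rfl
        intro i _
        congr
    refine h1.trans ?_
    have hx1 : ε / (2 * T) ^ w ≤ 1 := by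
      rw [div_le_one (by linarith)]; linarith
    have hx0 : 0 < ε / (2 * T) ^ w := by positivity
    have hδp : δ ^ (1 - 1 / T) ≤ ε / (2 * T) ^ w := by
      rw [hδ, ← Real.rpow_mul hx0.le]
      simpa using Real.rpow_le_rpow_of_exponent_ge hx0 hx1
        (show (1:ℝ) ≤ 2 * (1 - 1 / T) by linarith)
    have h2 : ∀ i ∈ Finset.univ \ J, pL C i ≤ pL C i ^ (1 / T) * (ε / (2 * T) ^ w) := by
      intro i hi
      simp only [J, Finset.mem_sdiff, Finset.mem_filter, Finset.mem_univ, true_and, not_le] at hi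
      have e : pL C i = pL C i ^ (1 / T) * pL C i ^ (1 - 1 / T) := by
        rw [← Real.rpow_add' (hp0 i) (by norm_num)]
        norm_num
      have h3 : pL C i ^ (1 - 1 / T) ≤ ε / (2 * T) ^ w :=
        (Real.rpow_le_rpow (hp0 i) hi.le (by linarith)).trans hδp
      calc pL C i = pL C i ^ (1 / T) * pL C i ^ (1 - 1 / T) := e
        _ ≤ _ := mul_le_mul_of_nonneg_left h3 (Real.rpow_nonneg (hp0 i) _)
    refine (Finset.sum_le_sum h2).trans ?_
    rw [← Finset.sum_mul]
    have h4 : ∑ i ∈ Finset.univ \ J, pL C i ^ (1 / T) ≤ (2 * T) ^ w :=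
      le_trans (Finset.sum_le_sum_of_subset_of_nonneg (Finset.subset_univ _)
        (fun i _ _ => Real.rpow_nonneg (hp0 i) _)) hsum
    calc _ ≤ (2 * T) ^ w * (ε / (2 * T) ^ w) := mul_le_mul_of_nonneg_right h4 hx0.le
      _ = ε := by field_simp
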